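/- arXiv:2005.02448 — 2 statements merged into one kernel-verified Lean document; each statement's English description precedes it below -/
import Mathlib

section
/- Let σ = [[a,b],[c,d]] ∈ GL_2(F_q) with ac ≠ 0, and let f(x) = x^n - A be irreducible over F_q with A ≠ (a/c)^n·(c^n A ≠ a^n, i.e., f(a/c) ≠ 0). Let g = P_σ(f) and α a root of g. Then α is normal over F_q if and only if c^{n-1} d A - b a^{n-1} ≠ 0. -/
open Polynomial Module

/-- `P_σ(f)(x) = (cx+d)^n f((ax+b)/(cx+d))` as a polynomial, for `n = deg f`. -/
noncomputable def Pmat {K : Type} [Field K] (a b c d : K) (f : Polynomial K) : Polynomial K :=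
  ∑ i ∈ Finset.range (f.natDegree + 1),
    C (f.coeff i) * (C a * X + C b) ^ i * (C c * X + C d) ^ (f.natDegree - i)

/-!
Write `q = card K`, `G = Gal(L/K)` and `β = (a α + b) / (c α + d)`, so that `β ^ n = A`. Then
`c α + d = (a d - b c) (a - c β)⁻¹`, and the geometric series shows that every coordinate of `α`
on the powers `β ^ j` with `j ≠ 0` is nonzero, while the coordinate on `1` is
`(c ^ (n - 1) d A - b a ^ (n - 1)) / (a ^ n - c ^ n A)`.

Frobenius permutes the lines `K β ^ j` by `j ↦ q j` on `ZMod n`, and `α` is normal iff its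
support meets every orbit of this permutation, the orbit `{0}` being the only critical one here.
Indeed `L` is the regular representation of `G`, and `K[G]` is semisimple as `n` is prime to `q`,
so the annihilator of `α` in `K[G]` is generated by an idempotent, hence by an element fixed by
`x ↦ x ^ q`. The endomorphisms of `L` diagonal in the `β ^ j` with eigenvalues constant on orbits
commute with `G`, hence come from fixed elements of `K[G]`; by counting, all fixed elements arise
this way, and such a diagonal endomorphism kills `α` iff it vanishes on the support of `α`.
-/

section FiniteField

variable {K : Type*} [Field K] [Fintype K] {n : ℕ}

lemma natCast_ne_zero_iff_coprime_card : (n : K) ≠ 0 ↔ n.Coprime (Fintype.card K) := by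
  obtain ⟨p, _⟩ := CharP.exists K
  obtain ⟨m, hp, hcard⟩ := FiniteField.card K p
  rw [hcard, Nat.coprime_pow_right_iff m.pos, Nat.coprime_comm, hp.coprime_iff_not_dvd, Ne,
    CharP.cast_eq_zero_iff K p]

lemma coprime_card_of_irreducible_X_pow_sub_C {A : K} (hirr : Irreducible ((X : K[X]) ^ n - C A)) :
    n.Coprime (Fintype.card K) := by
  refine natCast_ne_zero_iff_coprime_card.mp fun hn ↦ ?_
  have hder : derivative ((X : K[X]) ^ n - C A) ≠ 0 :=
    (separable_iff_derivative_ne_zero hirr).mp (PerfectField.separable_of_irreducible hirr)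
  exact hder (by simp [derivative_X_pow, hn])

end FiniteField

section GroupAlgebra

variable {K G : Type*} [Field K] [Fintype K]

lemma pow_card_eq_mapDomain [CommMonoid G] (x : MonoidAlgebra K G) :
    x ^ Fintype.card K = x.mapDomain (· ^ Fintype.card K) := by
  have h : FiniteField.frobeniusAlgHom K (MonoidAlgebra K G) =
      MonoidAlgebra.mapDomainAlgHom K K (powMonoidHom (Fintype.card K)) :=
    MonoidAlgebra.algHom_ext (by simp [MonoidAlgebra.single_pow]) (by ext)
  exact DFunLike.congr_fun h x

variable [CommGroup G] (hG : (Nat.card G).Coprime (Fintype.card K))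
include hG

lemma coeff_pow_card_pow_card (x : MonoidAlgebra K G) (g : G) :
    (x ^ Fintype.card K).coeff (g ^ Fintype.card K) = x.coeff g := by
  rw [pow_card_eq_mapDomain]
  exact Finsupp.mapDomain_apply (powCoprime hG).injective _ _

lemma pow_card_eq_self_iff {x : MonoidAlgebra K G} :
    x ^ Fintype.card K = x ↔ ∀ g, x.coeff (g ^ Fintype.card K) = x.coeff g := by
  constructor
  · intro hx g
    rw [← coeff_pow_card_pow_card hG x g, hx]
  · intro hx
    ext g
    obtain ⟨h, rfl⟩ := (powCoprime hG).surjective g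
    exact (coeff_pow_card_pow_card hG x h).trans (hx h).symm

end GroupAlgebra

section PowerMap

lemma powCoprime_pow_apply {G : Type*} [Group G] {m : ℕ} (h : (Nat.card G).Coprime m) (N : ℕ)
    (g : G) : (powCoprime h ^ N : Equiv.Perm G) g = g ^ m ^ N := by
  induction N with
  | zero => simp
  | succ N ih => rw [pow_succ', Equiv.Perm.mul_apply, ih, powCoprime_apply, pow_succ, pow_mul]

lemma apply_pow_pow_eq {M X : Type*} [Monoid M] {m : ℕ} {k : M → X} (hk : ∀ g, k (g ^ m) = k g)
    (N : ℕ) (g : M) : k (g ^ m ^ N) = k g := by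
  induction N with
  | zero => simp
  | succ N ih => rw [pow_succ, pow_mul, hk, ih]

end PowerMap

section Diagonal

variable {K V ι : Type*} [CommSemiring K] [AddCommMonoid V] [Module K V]

/-- The embedding of `ι → K` into `End K V` as the endomorphisms diagonal in the basis `b`. -/
noncomputable def diagonalEnd (b : Basis ι K V) : (ι → K) →ₐ[K] End K V where
  toFun k := b.constr K fun i ↦ k i • b i
  map_zero' := b.ext fun i ↦ by simp
  map_one' := b.ext fun i ↦ by simp
  map_add' k l := b.ext fun i ↦ by simp [add_smul]
  map_mul' k l := b.ext fun i ↦ by simp [smul_smul, mul_comm]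
  commutes' r := b.ext fun i ↦ by simp

variable (b : Basis ι K V)

lemma diagonalEnd_apply_self (k : ι → K) (i : ι) : diagonalEnd b k (b i) = k i • b i :=
  b.constr_basis K _ i

lemma repr_diagonalEnd (k : ι → K) (v : V) (i : ι) :
    b.repr (diagonalEnd b k v) i = k i * b.repr v i := by
  have h : b.coord i ∘ₗ diagonalEnd b k = k i • b.coord i := b.ext fun j ↦ by
    obtain rfl | hij := eq_or_ne j i <;> simp [diagonalEnd_apply_self, *]
  exact LinearMap.congr_fun h v

lemma diagonalEnd_injective : Function.Injective (diagonalEnd b) := fun k l h ↦ by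
  ext i
  have hi := congrArg (fun T : End K V ↦ b.repr (T (b i)) i) h
  simpa [repr_diagonalEnd] using hi

end Diagonal

section Representation

lemma asAlgebraHom_apply_eq_linearCombination {K G V : Type*} [CommSemiring K] [Monoid G]
    [AddCommMonoid V] [Module K V] {ρ : Representation K G V} (x : MonoidAlgebra K G) (v : V) :
    ρ.asAlgebraHom x v = Finsupp.linearCombination K (fun g ↦ ρ g v) x.coeff := by
  simp [Representation.asAlgebraHom_def, MonoidAlgebra.lift_apply,
    Finsupp.linearCombination_apply, Finsupp.sum]

lemma linearIndependent_iff_asAlgebraHom_apply {K G V : Type*} [CommRing K] [Monoid G]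
    [AddCommGroup V] [Module K V] {ρ : Representation K G V} {v : V} :
    LinearIndependent K (fun g ↦ ρ g v) ↔ ∀ x, ρ.asAlgebraHom x v = 0 → x = 0 := by
  simp only [linearIndependent_iff, asAlgebraHom_apply_eq_linearCombination]
  exact ⟨fun h x hx ↦ MonoidAlgebra.coeff_injective (h x.coeff hx), fun h l hl ↦
    congrArg MonoidAlgebra.coeff (h ⟨l⟩ hl)⟩

section Regular

variable {K G V : Type*} [CommSemiring K] [CommMonoid G] [AddCommMonoid V] [Module K V]
  {ρ : Representation K G V} {B : Basis G K V} (hB : ∀ g, B g = ρ g (B 1))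
include hB

lemma asAlgebraHom_apply_basis_one (x : MonoidAlgebra K G) :
    ρ.asAlgebraHom x (B 1) = B.repr.symm x.coeff := by
  simp only [asAlgebraHom_apply_eq_linearCombination, ← hB, B.repr_symm_apply]

lemma asAlgebraHom_injective : Function.Injective ρ.asAlgebraHom := fun x y h ↦ by
  have h1 := LinearMap.congr_fun h (B 1)
  rw [asAlgebraHom_apply_basis_one hB, asAlgebraHom_apply_basis_one hB] at h1
  exact MonoidAlgebra.coeff_injective (B.repr.symm.injective h1)

lemma exists_asAlgebraHom_eq_of_commute {T : End K V} (hT : ∀ g, Commute (ρ g) T) :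
    ∃ x, ρ.asAlgebraHom x = T := by
  let x : MonoidAlgebra K G := ⟨B.repr (T (B 1))⟩
  have hx : ρ.asAlgebraHom x (B 1) = T (B 1) := by simp [x, asAlgebraHom_apply_basis_one hB]
  have hxg (g : G) : Commute (ρ g) (ρ.asAlgebraHom x) := by
    rw [← ρ.asAlgebraHom_of]
    exact (Commute.all _ x).map ρ.asAlgebraHom
  refine ⟨x, B.ext fun g ↦ ?_⟩
  have h₁ := LinearMap.congr_fun (hT g).eq (B 1)
  have h₂ := LinearMap.congr_fun (hxg g).eq (B 1)
  simp only [Module.End.mul_apply] at h₁ h₂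
  rw [hB, ← h₁, ← h₂, hx]

end Regular

section Semisimple

variable {K G V : Type*} [Field K] [Fintype K] [CommGroup G] [Finite G] [AddCommGroup V]
  [Module K V] {ρ : Representation K G V} (hG : (Nat.card G).Coprime (Fintype.card K))
include hG

lemma linearIndependent_iff_asAlgebraHom_apply_of_pow_card_eq_self {v : V} :
    LinearIndependent K (fun g ↦ ρ g v) ↔
      ∀ x, x ^ Fintype.card K = x → ρ.asAlgebraHom x v = 0 → x = 0 := by
  have : NeZero (Nat.card G : K) := ⟨natCast_ne_zero_iff_coprime_card.mpr hG⟩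
  rw [linearIndependent_iff_asAlgebraHom_apply]
  refine ⟨fun h x _ ↦ h x, fun h x hx ↦ ?_⟩
  -- The annihilator of `v` is generated by an idempotent, which the Frobenius map fixes.
  let I : Ideal (MonoidAlgebra K G) := Ideal.torsionOf _ ρ.asModule v
  obtain ⟨e, he, hI⟩ := IsSemisimpleRing.ideal_eq_span_idempotent I
  have he0 : e = 0 := h e (he.pow_eq Fintype.card_ne_zero)
    (show e ∈ I from hI ▸ Ideal.mem_span_singleton_self e)
  have hxI : x ∈ I := hx
  simpa [hI, he0] using hxI

variable {B : Basis G K V} (hB : ∀ g, B g = ρ g (B 1)) {b : Basis G K V}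
  (hb : ∀ g h, ∃ (m : ℕ) (s : K), ρ g (b h) = s • b (h ^ Fintype.card K ^ m))
include hB hb

lemma image_asAlgebraHom_eq_image_diagonalEnd :
    ρ.asAlgebraHom '' {x | x ^ Fintype.card K = x} =
      diagonalEnd b '' {k | ∀ g, k (g ^ Fintype.card K) = k g} := by
  have : Finite (MonoidAlgebra K G) :=
    .of_injective _ (DFunLike.coe_injective.comp MonoidAlgebra.coeff_injective)
  have hcomm {k : G → K} (hk : ∀ g, k (g ^ Fintype.card K) = k g) (g : G) :
      Commute (ρ g) (diagonalEnd b k) := by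
    refine b.ext fun h ↦ ?_
    obtain ⟨m, s, hs⟩ := hb g h
    simp [diagonalEnd_apply_self, hs, apply_pow_pow_eq hk, smul_comm s]
  -- Both sides are indexed by functions on `G` invariant under `g ↦ g ^ card K`.
  symm
  refine Set.eq_of_subset_of_ncard_le ?_ ?_ (Set.toFinite _)
  · rintro _ ⟨k, hk, rfl⟩
    obtain ⟨x, hx⟩ := exists_asAlgebraHom_eq_of_commute hB (hcomm hk)
    refine ⟨x, asAlgebraHom_injective hB ?_, hx⟩
    rw [map_pow, hx, ← map_pow]
    congr 1
    ext g
    exact FiniteField.pow_card (k g)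
  · rw [Set.ncard_image_of_injective _ (asAlgebraHom_injective hB),
      Set.ncard_image_of_injective _ (diagonalEnd_injective b)]
    refine Set.ncard_le_ncard_of_injOn (fun x ↦ ⇑x.coeff) (fun x hx ↦ ?_) ?_ (Set.toFinite _)
    · exact (pow_card_eq_self_iff hG).mp hx
    · exact (DFunLike.coe_injective.comp MonoidAlgebra.coeff_injective).injOn

lemma linearIndependent_iff_diagonalEnd_apply {v : V} :
    LinearIndependent K (fun g ↦ ρ g v) ↔
      ∀ k : G → K, (∀ g, k (g ^ Fintype.card K) = k g) → diagonalEnd b k v = 0 → k = 0 := by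
  rw [linearIndependent_iff_asAlgebraHom_apply_of_pow_card_eq_self hG]
  have h : (∀ T ∈ ρ.asAlgebraHom '' {x | x ^ Fintype.card K = x}, T v = 0 → T = 0) ↔
      ∀ T ∈ diagonalEnd b '' {k | ∀ g, k (g ^ Fintype.card K) = k g}, T v = 0 → T = 0 := by
    rw [image_asAlgebraHom_eq_image_diagonalEnd hG hB hb]
  simpa only [Set.forall_mem_image, Set.mem_ofPred_eq,
    map_eq_zero_iff _ (asAlgebraHom_injective hB),
    map_eq_zero_iff _ (diagonalEnd_injective b)] using h

theorem linearIndependent_iff_forall_exists_repr_ne_zero {v : V} :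
    LinearIndependent K (fun g ↦ ρ g v) ↔
      ∀ h, ∃ m : ℕ, b.repr v (h ^ Fintype.card K ^ m) ≠ 0 := by
  rw [linearIndependent_iff_diagonalEnd_apply hG hB hb]
  constructor
  · intro hv h
    by_contra! hzero
    let σ : Equiv.Perm G := powCoprime hG
    let k : G → K := Set.indicator {g | σ.SameCycle h g} 1
    have hk (g : G) : k (g ^ Fintype.card K) = k g :=
      Set.indicator_eq_indicator (s := {g | σ.SameCycle h g}) (t := {g | σ.SameCycle h g})
        (Equiv.Perm.sameCycle_apply_right (f := σ)) rfl
    have hkv : diagonalEnd b k v = 0 := b.repr.injective <| Finsupp.ext fun g ↦ by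
      rw [repr_diagonalEnd, map_zero, Finsupp.zero_apply, mul_eq_zero, Set.indicator_apply_eq_zero,
        or_iff_not_imp_right]
      intro hg hσ
      obtain ⟨m, rfl⟩ := hσ.exists_nat_pow_eq
      exact absurd (hzero m) (by rwa [powCoprime_pow_apply] at hg)
    have hkh : k h = 1 := Set.indicator_of_mem (Equiv.Perm.SameCycle.refl σ h) 1
    simp [hv k hk hkv] at hkh
  · intro hv k hk hkv
    ext h
    obtain ⟨m, hm⟩ := hv h
    have h0 : k (h ^ Fintype.card K ^ m) * b.repr v (h ^ Fintype.card K ^ m) = 0 := by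
      rw [← repr_diagonalEnd, hkv, map_zero, Finsupp.zero_apply]
    rw [apply_pow_pow_eq hk] at h0
    exact (mul_eq_zero.mp h0).resolve_right hm

end Semisimple

end Representation

section Binomial

lemma repr_algebraMap {K L ι : Type*} [CommSemiring K] [Semiring L] [Algebra K L] [DecidableEq ι]
    {bas : Basis ι K L} {i : ι} (hi : bas i = 1) (r : K) (j : ι) :
    bas.repr (algebraMap K L r) j = if i = j then r else 0 := by
  rw [Algebra.algebraMap_eq_smul_one, ← hi, map_smul, bas.repr_self, Finsupp.smul_single_one,
    Finsupp.single_apply]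

lemma pow_eq_smul_pow_val {K L : Type*} [CommSemiring K] [CommSemiring L] [Algebra K L] {n : ℕ}
    {A : K} {β : L} (hβ : β ^ n = algebraMap K L A) (k : ℕ) :
    β ^ k = A ^ (k / n) • β ^ (k : ZMod n).val := by
  rw [ZMod.val_natCast, Algebra.smul_def, map_pow, ← hβ, ← pow_mul, ← pow_add, Nat.div_add_mod]

lemma sum_zmod_val {M : Type*} [AddCommMonoid M] {n : ℕ} [NeZero n] (f : ℕ → M) :
    ∑ j : ZMod n, f j.val = ∑ j ∈ Finset.range n, f j := by
  cases n with
  | zero => exact absurd rfl (NeZero.ne 0)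
  | succ m => exact Fin.sum_univ_eq_sum_range f (m + 1)

lemma sub_mul_sum_smul_pow_val {K L : Type*} [CommRing K] [CommRing L] [Algebra K L] {n : ℕ}
    [NeZero n] {A : K} {β : L} (hβ : β ^ n = algebraMap K L A) (a c : K) :
    (algebraMap K L a - algebraMap K L c * β) *
      ∑ j : ZMod n, (a ^ (n - 1 - j.val) * c ^ j.val) • β ^ j.val =
        algebraMap K L (a ^ n - c ^ n * A) := by
  rw [sum_zmod_val fun j ↦ (a ^ (n - 1 - j) * c ^ j) • β ^ j]
  calc
    _ = (algebraMap K L a - algebraMap K L c * β) * ∑ j ∈ Finset.range n,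
          (algebraMap K L c * β) ^ j * algebraMap K L a ^ (n - 1 - j) := by
      simp only [Algebra.smul_def, map_mul, map_pow, mul_pow, mul_comm, mul_left_comm]
    _ = algebraMap K L a ^ n - (algebraMap K L c * β) ^ n := (Commute.all _ _).mul_neg_geom_sum₂ n
    _ = _ := by rw [mul_pow, hβ, map_sub, map_mul, map_pow, map_pow]

variable {K L : Type*} [Field K] [Field L] [Algebra K L] {n : ℕ} [NeZero n] {A : K} {β : L}

lemma exists_basis_pow_val (hrank : finrank K L = n)
    (hirr : Irreducible ((X : K[X]) ^ n - C A)) (hβ : β ^ n = algebraMap K L A) :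
    ∃ b : Basis (ZMod n) K L, ∀ j, b j = β ^ j.val := by
  have hmin : minpoly K β = X ^ n - C A :=
    (minpoly.eq_of_irreducible_of_monic hirr (by simp [hβ])
      (monic_X_pow_sub_C A (NeZero.ne n))).symm
  have hdeg : (minpoly K β).natDegree = n := by rw [hmin, natDegree_X_pow_sub_C]
  have hli : LinearIndependent K fun j : ZMod n ↦ β ^ j.val :=
    (linearIndependent_pow (K := K) β).comp
      (fun j : ZMod n ↦ ⟨j.val, hdeg.symm ▸ ZMod.val_lt j⟩) fun i j h ↦
        ZMod.val_injective n (congrArg Fin.val h)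
  exact ⟨basisOfLinearIndependentOfCardEqFinrank hli (by rw [ZMod.card, hrank]), fun j ↦ by simp⟩

lemma repr_inv_sub (hβ : β ^ n = algebraMap K L A) {bas : Basis (ZMod n) K L}
    (hbas : ∀ j, bas j = β ^ j.val) {a c : K} (hac : a ^ n - c ^ n * A ≠ 0) (j : ZMod n) :
    bas.repr (algebraMap K L a - algebraMap K L c * β)⁻¹ j =
      a ^ (n - 1 - j.val) * c ^ j.val / (a ^ n - c ^ n * A) := by
  have hinv : (algebraMap K L a - algebraMap K L c * β)⁻¹ =
      ∑ j : ZMod n, (a ^ (n - 1 - j.val) * c ^ j.val / (a ^ n - c ^ n * A)) • bas j := by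
    refine inv_eq_of_mul_eq_one_right ?_
    simp only [hbas, div_eq_inv_mul, mul_smul _⁻¹, ← Finset.smul_sum, mul_smul_comm]
    rw [sub_mul_sum_smul_pow_val hβ, Algebra.smul_def, ← map_mul, inv_mul_cancel₀ hac, map_one]
  rw [hinv, bas.repr_sum_self]

end Binomial

section Frobenius

variable {K L : Type*} [Field K] [Fintype K] [Field L] [Algebra K L]

lemma frobenius_pow_apply [Algebra.IsAlgebraic K L] (m : ℕ) (x : L) :
    (FiniteField.frobeniusAlgEquivOfAlgebraic K L ^ m) x = x ^ Fintype.card K ^ m := by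
  rw [AlgEquiv.coe_pow, FiniteField.coe_frobeniusAlgEquivOfAlgebraic_iterate]

lemma exists_basis_pow_card_iff [FiniteDimensional K L] {n : ℕ} (hrank : finrank K L = n) {α : L} :
    (∃ bas : Basis (Fin n) K L, ∀ i : Fin n, bas i = α ^ Fintype.card K ^ (i : ℕ)) ↔
      LinearIndependent K (fun g : Gal(L/K) ↦ g α) := by
  subst hrank
  have : Finite L := Module.finite_of_finite K
  have : Nonempty (Fin (finrank K L)) := ⟨⟨0, finrank_pos⟩⟩
  let e := Equiv.ofBijective _ (FiniteField.bijective_frobeniusAlgEquivOfAlgebraic_pow K L)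
  have he : (fun g : Gal(L/K) ↦ g α) ∘ e =
      fun i : Fin (finrank K L) ↦ α ^ Fintype.card K ^ (i : ℕ) := by
    ext i
    exact frobenius_pow_apply i α
  rw [← linearIndependent_equiv' e he]
  exact ⟨fun ⟨bas, hbas⟩ ↦ funext hbas ▸ bas.linearIndependent, fun h ↦
    ⟨basisOfLinearIndependentOfCardEqFinrank h (Fintype.card_fin _), fun i ↦ by simp⟩⟩

variable {n : ℕ} [NeZero n] {A : K} {β : L}

lemma frobenius_pow_apply_pow_val [Algebra.IsAlgebraic K L] (hβ : β ^ n = algebraMap K L A)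
    (m : ℕ) (j : ZMod n) :
    (FiniteField.frobeniusAlgEquivOfAlgebraic K L ^ m) (β ^ j.val) =
      A ^ (Fintype.card K ^ m * j.val / n) • β ^ ((Fintype.card K : ZMod n) ^ m * j).val := by
  rw [frobenius_pow_apply, ← pow_mul', pow_eq_smul_pow_val hβ, Nat.cast_mul, Nat.cast_pow,
    ZMod.natCast_zmod_val]

theorem linearIndependent_galois_iff_forall_exists_repr_ne_zero
    (hn : n.Coprime (Fintype.card K)) (hβ : β ^ n = algebraMap K L A)
    {bas : Basis (ZMod n) K L} (hbas : ∀ j, bas j = β ^ j.val) {α : L} :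
    LinearIndependent K (fun g : Gal(L/K) ↦ g α) ↔
      ∀ j : ZMod n, ∃ m : ℕ, bas.repr α ((Fintype.card K : ZMod n) ^ m * j) ≠ 0 := by
  have : FiniteDimensional K L := bas.finiteDimensional_of_finite
  have : Finite L := Module.finite_of_finite K
  let _ : CommGroup Gal(L/K) := IsCyclic.commGroup
  let φ : Gal(L/K) := FiniteField.frobeniusAlgEquivOfAlgebraic K L
  have hφ (g : Gal(L/K)) : ∃ m : ℕ, φ ^ m = g :=
    let ⟨m, hm⟩ := (FiniteField.bijective_frobeniusAlgEquivOfAlgebraic_pow K L).2 g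
    ⟨m, hm⟩
  have hcard : Nat.card Gal(L/K) = n := by
    rw [IsGalois.card_aut_eq_finrank, finrank_eq_card_basis bas, ZMod.card]
  let e : ZMod n ≃ Gal(L/K) := Multiplicative.ofAdd.trans <| MulEquiv.toEquiv <|
    zmodMulEquivOfGenerator (g := φ)
      (fun g ↦ let ⟨m, hm⟩ := hφ g; ⟨m, (zpow_natCast φ m).trans hm⟩) hcard
  have he (j : ZMod n) (m : ℕ) :
      e j ^ Fintype.card K ^ m = e ((Fintype.card K : ZMod n) ^ m * j) := by
    simp [e, ← map_pow, ← ofAdd_nsmul]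
  have hb (g h : Gal(L/K)) :
      ∃ (m : ℕ) (s : K), g (bas.reindex e h) = s • bas.reindex e (h ^ Fintype.card K ^ m) := by
    obtain ⟨m, rfl⟩ := hφ g
    obtain ⟨j, rfl⟩ := e.surjective h
    refine ⟨m, A ^ (Fintype.card K ^ m * j.val / n), ?_⟩
    simpa only [he, bas.reindex_apply, e.symm_apply_apply, hbas]
      using frobenius_pow_apply_pow_val hβ m j
  have key : LinearIndependent K (fun g : Gal(L/K) ↦ g α) ↔
      ∀ h, ∃ m : ℕ, (bas.reindex e).repr α (h ^ Fintype.card K ^ m) ≠ 0 :=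
    linearIndependent_iff_forall_exists_repr_ne_zero
      (ρ := Representation.ofDistribMulAction K Gal(L/K) L) (hcard ▸ hn)
      (B := IsGalois.normalBasis K L) IsGalois.normalBasis_apply hb
  rw [← e.forall_congr_right] at key
  simpa only [he, bas.repr_reindex_apply, e.symm_apply_apply] using key

end Frobenius

section Pmat

variable {K : Type} {L : Type*} [Field K] [Field L] [Algebra K L] {a b c d : K} {f : K[X]} {α : L}

lemma aeval_Pmat : aeval α (Pmat a b c d f) = ∑ i ∈ Finset.range (f.natDegree + 1),
    algebraMap K L (f.coeff i) * (algebraMap K L a * α + algebraMap K L b) ^ i *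
      (algebraMap K L c * α + algebraMap K L d) ^ (f.natDegree - i) := by
  simp [Pmat]

lemma denom_ne_zero_of_aeval_Pmat_eq_zero (hf : f ≠ 0) (hdet : a * d - b * c ≠ 0)
    (hα : aeval α (Pmat a b c d f) = 0) : algebraMap K L c * α + algebraMap K L d ≠ 0 := by
  intro hden
  have hnum : algebraMap K L a * α + algebraMap K L b ≠ 0 := by
    intro hnum
    refine (map_ne_zero (algebraMap K L)).mpr hdet ?_
    simp only [map_sub, map_mul]
    linear_combination algebraMap K L a * hden - algebraMap K L c * hnum
  rw [aeval_Pmat, hden, Finset.sum_eq_single_of_mem f.natDegree (by simp)] at hα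
  · simp [hf, hnum] at hα
  · intro i hi hne
    have := Finset.mem_range.mp hi
    rw [zero_pow (by omega), mul_zero]

lemma aeval_div_eq_zero_of_aeval_Pmat_eq_zero
    (hden : algebraMap K L c * α + algebraMap K L d ≠ 0) (hα : aeval α (Pmat a b c d f) = 0) :
    aeval ((algebraMap K L a * α + algebraMap K L b) /
      (algebraMap K L c * α + algebraMap K L d)) f = 0 := by
  refine (mul_eq_zero_iff_left (pow_ne_zero f.natDegree hden)).mp ?_
  rw [← hα, aeval_Pmat, aeval_eq_sum_range, Finset.mul_sum]
  refine Finset.sum_congr rfl fun i hi ↦ ?_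
  rw [pow_sub₀ _ hden (Nat.lt_succ_iff.mp (Finset.mem_range.mp hi)), Algebra.smul_def, div_pow]
  ring

end Pmat

section Mobius

variable {K L : Type*} [Field K] [Field L] [Algebra K L] {a b c d A : K} {α β : L}

lemma mul_add_eq_mul_inv_sub (hsub : algebraMap K L a - algebraMap K L c * β ≠ 0) (hβα : β *
      (algebraMap K L c * α + algebraMap K L d) = algebraMap K L a * α + algebraMap K L b) :
    algebraMap K L c * α + algebraMap K L d =
      algebraMap K L (a * d - b * c) * (algebraMap K L a - algebraMap K L c * β)⁻¹ := by
  rw [eq_mul_inv_iff_mul_eq₀ hsub]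
  simp only [map_sub, map_mul]
  linear_combination -algebraMap K L c * hβα

lemma sub_mul_ne_zero {n : ℕ} (hβ : β ^ n = algebraMap K L A) (hac : a ^ n - c ^ n * A ≠ 0) :
    algebraMap K L a - algebraMap K L c * β ≠ 0 := by
  refine fun h ↦ hac ((algebraMap K L).injective ?_)
  rw [map_sub, map_pow, map_mul, map_pow, ← hβ, ← mul_pow, sub_eq_zero.mp h, sub_self, map_zero]

variable {n : ℕ} [NeZero n] {bas : Basis (ZMod n) K L} (hβ : β ^ n = algebraMap K L A)
  (hbas : ∀ j, bas j = β ^ j.val) (hac : a ^ n - c ^ n * A ≠ 0)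
  (hβα : β * (algebraMap K L c * α + algebraMap K L d) = algebraMap K L a * α + algebraMap K L b)
include hβ hbas hac hβα

lemma mul_mobius_repr_add_ite (j : ZMod n) : c * bas.repr α j + (if 0 = j then d else 0) =
    (a * d - b * c) * (a ^ (n - 1 - j.val) * c ^ j.val / (a ^ n - c ^ n * A)) := by
  have hmul (r : K) (x : L) : bas.repr (algebraMap K L r * x) j = r * bas.repr x j := by
    rw [← Algebra.smul_def, map_smul, Finsupp.smul_apply, smul_eq_mul]
  have h := congrArg (bas.repr · j) (mul_add_eq_mul_inv_sub (sub_mul_ne_zero hβ hac) hβα)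
  simpa only [map_add, Finsupp.add_apply, hmul, repr_inv_sub hβ hbas hac,
    repr_algebraMap (show bas 0 = 1 by simp [hbas])] using h

lemma mobius_repr_ne_zero (hdet : a * d - b * c ≠ 0) (ha : a ≠ 0) (hc : c ≠ 0) {j : ZMod n}
    (hj : j ≠ 0) : bas.repr α j ≠ 0 := by
  have h := mul_mobius_repr_add_ite hβ hbas hac hβα j
  rw [if_neg hj.symm, add_zero] at h
  refine right_ne_zero_of_mul (h ▸ mul_ne_zero hdet (div_ne_zero ?_ hac))
  exact mul_ne_zero (pow_ne_zero _ ha) (pow_ne_zero _ hc)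

lemma mul_mobius_repr_zero (hc : c ≠ 0) :
    (a ^ n - c ^ n * A) * bas.repr α 0 = c ^ (n - 1) * d * A - b * a ^ (n - 1) := by
  have h := mul_mobius_repr_add_ite hβ hbas hac hβα 0
  rw [if_pos rfl, ZMod.val_zero, Nat.sub_zero, pow_zero, mul_one, mul_div_assoc',
    eq_div_iff hac] at h
  refine mul_left_cancel₀ hc ?_
  linear_combination h + d * pow_sub_one_mul (NeZero.ne n) a
    - d * A * pow_sub_one_mul (NeZero.ne n) c

end Mobius

/-- Main Lemma, case `ac ≠ 0`: with `f = x^n - A` irreducible, `f(a/c) ≠ 0`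
(i.e. `c^n A ≠ a^n`), `g = P_σ(f)` and `α` a root of `g`, the element `α` is
normal over `F_q` iff `c^{n-1} d A - b a^{n-1} ≠ 0`. -/
theorem stmt_7 (K L : Type) [Field K] [Fintype K] [Field L] [Algebra K L]
    (q n : ℕ) (hq : Fintype.card K = q) (hrank : Module.finrank K L = n)
    (a b c d A : K) (ha : a ≠ 0) (hc : c ≠ 0) (hdet : a * d - b * c ≠ 0)
    (hirr : Irreducible ((X : Polynomial K) ^ n - C A))
    (hinf : c ^ n * A ≠ a ^ n)
    (α : L) (hα : aeval α (Pmat a b c d ((X : Polynomial K) ^ n - C A)) = 0) :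
    (∃ bas : Basis (Fin n) K L, ∀ i : Fin n, bas i = α ^ q ^ (i : ℕ)) ↔
      c ^ (n - 1) * d * A - b * a ^ (n - 1) ≠ 0 := by
  subst hq
  have hn : n ≠ 0 := ne_zero_of_irreducible_X_pow_sub_C hirr
  have : NeZero n := ⟨hn⟩
  have : FiniteDimensional K L := .of_finrank_pos (hrank ▸ Nat.pos_of_ne_zero hn)
  have hden := denom_ne_zero_of_aeval_Pmat_eq_zero hirr.ne_zero hdet hα
  have hroot := aeval_div_eq_zero_of_aeval_Pmat_eq_zero hden hα
  have hβα := div_mul_cancel₀ (algebraMap K L a * α + algebraMap K L b) hden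
  set β : L := (algebraMap K L a * α + algebraMap K L b) / (algebraMap K L c * α + algebraMap K L d)
  have hβ : β ^ n = algebraMap K L A := by simpa [sub_eq_zero] using hroot
  obtain ⟨bas, hbas⟩ := exists_basis_pow_val hrank hirr hβ
  have hac : a ^ n - c ^ n * A ≠ 0 := sub_ne_zero.mpr hinf.symm
  rw [exists_basis_pow_card_iff hrank,
    linearIndependent_galois_iff_forall_exists_repr_ne_zero
      (coprime_card_of_irreducible_X_pow_sub_C hirr) hβ hbas,
    ← mul_mobius_repr_zero hβ hbas hac hβα hc, mul_ne_zero_iff_left hac]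
  refine ⟨fun h ↦ by simpa using h 0, fun h0 j ↦ ⟨0, ?_⟩⟩
  obtain rfl | hj := eq_or_ne j 0
  · simpa using h0
  · simpa using mobius_repr_ne_zero hβ hbas hac hβα hdet ha hc hj
end

section
/- Let x^n - A be irreducible over F_q with root θ ∈ F_{q^n}, and let ~ be the equivalence relation on {0,1,...,n-1} given by l_1 ~ l_2 iff l_1 ≡ l_2 q^i (mod n) for some i ≥ 0, with equivalence classes M_l for l in a set of representatives S. Let V_l be the F_q-span of {θ^m : m ∈ M_l}. Then F_{q^n} = ⊕_{l ∈ S} V_l, each V_l is invariant under the Frobenius τ(x) = x^q, and an element α = Σ_{l∈S} α_l (α_l ∈ V_l) is normal over F_q if and only if α_l ≠ 0 for all l ∈ S. -/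
open Polynomial Module

/-! Let `G` be the Galois group of `L / K` and `q = #K`. By the normal basis theorem `L` is a free
`K[G]`-module of rank one, so the projections of `L` onto Frobenius-invariant summands `V l` are
given by idempotents `e l` of `K[G]`. An idempotent of `K[G]` is fixed by `x ↦ x ^ q`, so its
coefficients are constant on the orbits of `g ↦ g ^ q`. For the decomposition attached to
`X ^ n - A` these orbits are as many as the summands, hence every idempotent is a linear combination
of the `e l`. Now `α = ∑ α l` is normal if and only if its annihilator in `K[G]` vanishes. As `K[G]`
is semisimple, the annihilator is generated by an idempotent `∑ c l • e l`, and
`(∑ c l • e l) • α = ∑ c l • α l` vanishes only for `c = 0` when all the `α l` are nonzero. -/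

section Berlekamp

variable (K R : Type*) [Field K] [Fintype K] [CommRing R] [Algebra K R]

/-- The Berlekamp subalgebra of an algebra over a field with `q` elements, consisting of the
elements fixed by `x ↦ x ^ q`. It contains all idempotents, and its dimension bounds the number of
linearly independent ones. -/
def berlekampSubalgebra : Subalgebra K R :=
  AlgHom.equalizer (FiniteField.frobeniusAlgHom K R) (AlgHom.id K R)

variable {K R}

lemma mem_berlekampSubalgebra_iff {x : R} :
    x ∈ berlekampSubalgebra K R ↔ x ^ Fintype.card K = x :=
  Iff.rfl

lemma mem_berlekampSubalgebra_of_isIdempotentElem {e : R} (he : IsIdempotentElem e) :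
    e ∈ berlekampSubalgebra K R :=
  mem_berlekampSubalgebra_iff.2 (he.pow_eq Fintype.card_ne_zero)

end Berlekamp

section Projections

variable {R W ι : Type*} [CommRing R] [AddCommGroup W] [Module R W] [Module.Invertible R W]

lemma exists_isIdempotentElem_smul_of_isCompl {P Q : Submodule R W} (hPQ : IsCompl P Q) :
    ∃ e : R, IsIdempotentElem e ∧ (∀ x ∈ P, e • x = x) ∧ ∀ x ∈ Q, e • x = 0 := by
  have hbij := Module.Invertible.toModuleEnd_bijective R W
  obtain ⟨e, he⟩ := hbij.surjective (P.projection Q hPQ)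
  have he_smul (x : W) : e • x = P.projection Q hPQ x := congr($he x)
  refine ⟨e, hbij.injective ?_, fun x hx => ?_, fun x hx => ?_⟩
  · rw [map_mul, he, Submodule.isIdempotentElem_projection hPQ]
  · rw [he_smul, Submodule.projection_apply_of_mem_left hPQ hx]
  · rw [he_smul, Submodule.projection_apply_of_mem_right hPQ hx]

lemma exists_isIdempotentElem_smul_sum_eq [Fintype ι] [DecidableEq ι] {V : ι → Submodule R W}
    (hV : DirectSum.IsInternal V) :
    ∃ e : ι → R, (∀ l, IsIdempotentElem (e l)) ∧
      ∀ v : ι → W, (∀ l, v l ∈ V l) → ∀ l, e l • ∑ j, v j = v l := by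
  have hcompl (l : ι) : IsCompl (V l) (⨆ (j) (_ : j ≠ l), V j) :=
    ⟨hV.submodule_iSupIndep l,
      codisjoint_iff.2 ((iSup_split_single V l).symm.trans hV.submodule_iSup_eq_top)⟩
  choose e hidem hone hzero using fun l => exists_isIdempotentElem_smul_of_isCompl (hcompl l)
  refine ⟨e, hidem, fun v hv l => ?_⟩
  rw [Finset.smul_sum, Finset.sum_eq_single_of_mem l (Finset.mem_univ l), hone l _ (hv l)]
  exact fun j _ hj => hzero l _ (Submodule.mem_iSup_of_mem j (Submodule.mem_iSup_of_mem hj (hv j)))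

end Projections

section CyclicVectors

lemma linearIndependent_of_smul_sum_eq {K R W ι : Type*} [Field K] [Semiring R] [AddCommGroup W]
    [Module K W] [Module R W] [Fintype ι] {e : ι → R} {v : ι → W} (hv0 : ∀ l, v l ≠ 0)
    (hproj : ∀ c : ι → K, ∀ l, e l • ∑ j, c j • v j = c l • v l) : LinearIndependent K v := by
  refine Fintype.linearIndependent_iff.2 fun c hc l => ?_
  have hcl : c l • v l = 0 := by rw [← hproj c l, hc, smul_zero]
  exact (smul_eq_zero.1 hcl).resolve_right (hv0 l)

variable {K R W ι : Type*} [Field K] [CommRing R] [Algebra K R] [AddCommGroup W] [Module K W]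
  [Module R W] [IsScalarTower K R W] [Fintype ι]

lemma sum_smul_smul_sum_eq {e : ι → R} {v : ι → W} (hproj : ∀ l, e l • ∑ j, v j = v l)
    (c : ι → K) : (∑ l, c l • e l) • ∑ j, v j = ∑ l, c l • v l := by
  simp only [Finset.sum_smul, smul_assoc, hproj]

lemma span_range_eq_berlekampSubalgebra [Fintype K] [Module.Finite K R] {e : ι → R}
    (hidem : ∀ l, IsIdempotentElem (e l)) (hli : LinearIndependent K e)
    (hcard : finrank K (berlekampSubalgebra K R) ≤ Fintype.card ι) :
    Submodule.span K (Set.range e) = Subalgebra.toSubmodule (berlekampSubalgebra K R) := by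
  refine Submodule.eq_of_le_of_finrank_le (Submodule.span_le.2 ?_) ?_
  · rintro _ ⟨l, rfl⟩
    exact mem_berlekampSubalgebra_of_isIdempotentElem (hidem l)
  · rwa [finrank_span_eq_card hli]

theorem injective_toSpanSingleton_sum_iff_forall_ne_zero [Fintype K] [IsSemisimpleRing R]
    [Module.Finite K R] [Module.Invertible R W] [DecidableEq ι] {V : ι → Submodule R W}
    (hV : DirectSum.IsInternal V) (hne : ∀ l, V l ≠ ⊥)
    (hcard : finrank K (berlekampSubalgebra K R) ≤ Fintype.card ι)
    {a : ι → W} (ha : ∀ l, a l ∈ V l) :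
    Function.Injective (LinearMap.toSpanSingleton R W (∑ l, a l)) ↔ ∀ l, a l ≠ 0 := by
  obtain ⟨e, hidem, hproj⟩ := exists_isIdempotentElem_smul_sum_eq hV
  have hindep {v : ι → W} (hv : ∀ l, v l ∈ V l) (hv0 : ∀ l, v l ≠ 0) : LinearIndependent K v :=
    linearIndependent_of_smul_sum_eq hv0 fun c =>
      hproj _ fun j => Submodule.smul_of_tower_mem _ (c j) (hv j)
  choose w hwV hw0 using fun l => (Submodule.ne_bot_iff _).1 (hne l)
  refine ⟨fun hinj l hl => hw0 l ?_, fun ha0 => ?_⟩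
  · have he : e l = 0 := hinj (by simp [hproj a ha, hl])
    rw [← hproj w hwV l, he, zero_smul]
  · have he_indep : LinearIndependent K e := by
      refine .of_comp ((LinearMap.toSpanSingleton R W (∑ l, w l)).restrictScalars K) ?_
      simpa [Function.comp_def, hproj w hwV] using hindep hwV hw0
    obtain ⟨t, ht, hker⟩ :=
      IsSemisimpleRing.ideal_eq_span_idempotent (LinearMap.toSpanSingleton R W (∑ l, a l)).ker
    have hta : t • ∑ l, a l = 0 :=
      LinearMap.mem_ker.1 (hker.ge (Ideal.mem_span_singleton_self t))
    have ht_span : t ∈ Submodule.span K (Set.range e) := by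
      rw [span_range_eq_berlekampSubalgebra hidem he_indep hcard]
      exact mem_berlekampSubalgebra_of_isIdempotentElem ht
    obtain ⟨c, rfl⟩ := (Submodule.mem_span_range_iff_exists_fun K).1 ht_span
    rw [sum_smul_smul_sum_eq (hproj a ha)] at hta
    have hc := Fintype.linearIndependent_iff.1 (hindep ha ha0) c hta
    exact LinearMap.ker_eq_bot.1 (by simpa [hc] using hker)

end CyclicVectors

section GroupAlgebra

variable {K G ι : Type*} [Field K] [Fintype K] [CommGroup G]

lemma coprime_card_of_natCast_ne_zero {n : ℕ} (hn : (n : K) ≠ 0) : n.Coprime (Fintype.card K) := by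
  obtain ⟨p, _⟩ := CharP.exists K
  obtain ⟨k, hp, hk⟩ := FiniteField.card K p
  rw [hk]
  refine (hp.coprime_iff_not_dvd.2 fun hpn => hn ?_).symm.pow_right _
  exact (CharP.cast_eq_zero_iff K p n).2 hpn

lemma monoidAlgebra_pow_card (f : MonoidAlgebra K G) :
    f ^ Fintype.card K = f.mapDomain fun g => g ^ Fintype.card K := by
  have hfrob : FiniteField.frobeniusAlgHom K (MonoidAlgebra K G) =
      MonoidAlgebra.mapDomainAlgHom K K (powMonoidHom (Fintype.card K)) := by
    ext g : 2
    simp [MonoidAlgebra.single_pow]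
  exact congr($hfrob f)

lemma coeff_pow_card_of_mem_berlekampSubalgebra (hcop : (Nat.card G).Coprime (Fintype.card K))
    {f : MonoidAlgebra K G} (hf : f ∈ berlekampSubalgebra K (MonoidAlgebra K G)) (g : G) :
    f.coeff (g ^ Fintype.card K) = f.coeff g := by
  conv_lhs => rw [← mem_berlekampSubalgebra_iff.1 hf, monoidAlgebra_pow_card,
    MonoidAlgebra.coeff_mapDomain]
  exact Finsupp.mapDomain_apply (powCoprime hcop).injective f.coeff g

lemma coeff_pow_card_pow_of_mem_berlekampSubalgebra
    (hcop : (Nat.card G).Coprime (Fintype.card K))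
    {f : MonoidAlgebra K G} (hf : f ∈ berlekampSubalgebra K (MonoidAlgebra K G)) (g : G) (i : ℕ) :
    f.coeff (g ^ Fintype.card K ^ i) = f.coeff g := by
  induction i with
  | zero => rw [pow_zero, pow_one]
  | succ i ih =>
    rw [pow_succ, pow_mul, coeff_pow_card_of_mem_berlekampSubalgebra hcop hf, ih]

lemma finrank_berlekampSubalgebra_monoidAlgebra_le [Fintype ι]
    (hcop : (Nat.card G).Coprime (Fintype.card K)) {s : ι → G}
    (hs : ∀ g, ∃ l i, g = s l ^ Fintype.card K ^ i) :
    finrank K (berlekampSubalgebra K (MonoidAlgebra K G)) ≤ Fintype.card ι := by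
  let coeffs : MonoidAlgebra K G →ₗ[K] (ι → K) :=
    LinearMap.funLeft K K s ∘ₗ Finsupp.lcoeFun ∘ₗ (MonoidAlgebra.coeffLinearEquiv K).toLinearMap
  have hinj : Function.Injective
      (coeffs.domRestrict
        (Subalgebra.toSubmodule (berlekampSubalgebra K (MonoidAlgebra K G)))) := by
    rintro ⟨f, hf⟩ ⟨f', hf'⟩ hff'
    ext g
    obtain ⟨l, i, rfl⟩ := hs g
    rw [coeff_pow_card_pow_of_mem_berlekampSubalgebra hcop hf,
      coeff_pow_card_pow_of_mem_berlekampSubalgebra hcop hf']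
    exact congr($hff' l)
  exact (LinearMap.finrank_le_finrank_of_injective hinj).trans_eq (finrank_fintype_fun_eq_card K)

end GroupAlgebra

section GroupRepresentations

variable {K G W : Type*} [Field K] [Group G] [AddCommGroup W] [Module K W]
  {ρ : Representation K G W}

variable (ρ) in
lemma toSpanSingleton_asModule_eq_linearCombination (x : W) (r : MonoidAlgebra K G) :
    LinearMap.toSpanSingleton (MonoidAlgebra K G) ρ.asModule (ρ.asModuleEquiv.symm x) r =
      ρ.asModuleEquiv.symm (Finsupp.linearCombination K (fun g => ρ g x) r.coeff) := by
  induction r using MonoidAlgebra.induction_linear with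
  | zero => simp
  | add r s hr hs => simp only [map_add, hr, hs, MonoidAlgebra.coeff_add]
  | single g c =>
    rw [MonoidAlgebra.coeff_single, Finsupp.linearCombination_single]
    exact Representation.single_smul ρ c g (ρ.asModuleEquiv.symm x)

lemma linearIndependent_apply_iff_injective_toSpanSingleton {x : W} :
    LinearIndependent K (fun g => ρ g x) ↔ Function.Injective
      (LinearMap.toSpanSingleton (MonoidAlgebra K G) ρ.asModule (ρ.asModuleEquiv.symm x)) := by
  rw [funext (toSpanSingleton_asModule_eq_linearCombination ρ x)]
  exact ((EquivLike.comp_injective _ ρ.asModuleEquiv.symm).trans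
    (EquivLike.injective_comp (MonoidAlgebra.coeffLinearEquiv K) _)).symm

lemma bijective_toSpanSingleton_of_basis (b : Basis G K W) {x : W} (hb : ∀ g, b g = ρ g x) :
    Function.Bijective
      (LinearMap.toSpanSingleton (MonoidAlgebra K G) ρ.asModule (ρ.asModuleEquiv.symm x)) := by
  rw [funext (toSpanSingleton_asModule_eq_linearCombination ρ x), ← funext hb,
    ← Basis.coe_repr_symm]
  exact ρ.asModuleEquiv.symm.bijective.comp
    (b.repr.symm.bijective.comp (MonoidAlgebra.coeffLinearEquiv K).bijective)

end GroupRepresentations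

section CommGroupRepresentations

variable {K G W ι : Type*} [Field K] [CommGroup G] [AddCommGroup W] [Module K W]
  {ρ : Representation K G W}

lemma invertible_asModule_of_basis (b : Basis G K W) {x : W} (hb : ∀ g, b g = ρ g x) :
    Module.Invertible (MonoidAlgebra K G) ρ.asModule :=
  .congr (LinearEquiv.ofBijective _ (bijective_toSpanSingleton_of_basis b hb))

theorem linearIndependent_apply_sum_iff_forall_ne_zero [Fintype K] [Finite G]
    [NeZero (Nat.card G : K)] [Fintype ι] [DecidableEq ι] {V : ι → Subrepresentation ρ}
    (hV : DirectSum.IsInternal fun l => (V l).toSubmodule) (hne : ∀ l, (V l).toSubmodule ≠ ⊥)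
    (b : Basis G K W) {x : W} (hb : ∀ g, b g = ρ g x)
    {s : ι → G} (hs : ∀ g, ∃ l i, g = s l ^ Fintype.card K ^ i)
    {a : ι → W} (ha : ∀ l, a l ∈ (V l).toSubmodule) :
    LinearIndependent K (fun g => ρ g (∑ l, a l)) ↔ ∀ l, a l ≠ 0 := by
  have := invertible_asModule_of_basis b hb
  have hV' : DirectSum.IsInternal fun l => (V l).asSubmodule := hV
  have hne' (l : ι) : (V l).asSubmodule ≠ ⊥ := by
    obtain ⟨y, hy, hy0⟩ := (Submodule.ne_bot_iff _).1 (hne l)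
    exact (Submodule.ne_bot_iff _).2 ⟨y, hy, hy0⟩
  have hcard : finrank K (berlekampSubalgebra K (MonoidAlgebra K G)) ≤ Fintype.card ι :=
    finrank_berlekampSubalgebra_monoidAlgebra_le
      (coprime_card_of_natCast_ne_zero (NeZero.ne (Nat.card G : K))) hs
  rw [linearIndependent_apply_iff_injective_toSpanSingleton, map_sum]
  exact injective_toSpanSingleton_sum_iff_forall_ne_zero hV' hne' hcard ha

end CommGroupRepresentations

section FiniteField

variable {K L ι : Type*} [Field K] [Fintype K] [Field L] [Algebra K L]

lemma pow_card_mem_span {s : Set L} (hs : ∀ x ∈ s, x ^ Fintype.card K ∈ Submodule.span K s)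
    {x : L} (hx : x ∈ Submodule.span K s) : x ^ Fintype.card K ∈ Submodule.span K s := by
  have hle : Submodule.span K s ≤
      (Submodule.span K s).comap (FiniteField.frobeniusAlgHom K L).toLinearMap :=
    Submodule.span_le.2 hs
  exact hle hx

variable [Finite L]

lemma gal_apply_mem_of_pow_card_mem {U : Submodule K L} (hU : ∀ x ∈ U, x ^ Fintype.card K ∈ U)
    (g : Gal(L/K)) {x : L} (hx : x ∈ U) : g x ∈ U := by
  obtain ⟨i, rfl⟩ := (FiniteField.bijective_frobeniusAlgEquivOfAlgebraic_pow K L).surjective g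
  have hmaps : Set.MapsTo (FiniteField.frobeniusAlgEquivOfAlgebraic K L) U U := hU
  rw [AlgEquiv.coe_pow]
  exact hmaps.iterate i hx

lemma linearIndependent_pow_card_pow_iff {x : L} :
    LinearIndependent K (fun i : Fin (finrank K L) => x ^ Fintype.card K ^ (i : ℕ)) ↔
      LinearIndependent K fun g : Gal(L/K) => g x := by
  rw [← linearIndependent_equiv
    (.ofBijective _ (FiniteField.bijective_frobeniusAlgEquivOfAlgebraic_pow K L))]
  simp [Function.comp_def, AlgEquiv.coe_pow,
    FiniteField.coe_frobeniusAlgEquivOfAlgebraic_iterate]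

theorem linearIndependent_pow_card_pow_sum_iff_forall_ne_zero
    (hchar : (finrank K L : K) ≠ 0) [Fintype ι] [DecidableEq ι] {V : ι → Submodule K L}
    (hV : DirectSum.IsInternal V) (hne : ∀ l, V l ≠ ⊥)
    (hfrob : ∀ l, ∀ x ∈ V l, x ^ Fintype.card K ∈ V l) {s : ι → ℕ}
    (hs : ∀ m, ∃ l i, m ≡ s l * Fintype.card K ^ i [MOD finrank K L])
    {a : ι → L} (ha : ∀ l, a l ∈ V l) :
    LinearIndependent K
        (fun i : Fin (finrank K L) => (∑ l, a l) ^ Fintype.card K ^ (i : ℕ)) ↔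
      ∀ l, a l ≠ 0 := by
  let _ : CommGroup Gal(L/K) := IsCyclic.commGroup
  have : NeZero (Nat.card Gal(L/K) : K) := ⟨by rwa [IsGalois.card_aut_eq_finrank]⟩
  let σ := FiniteField.frobeniusAlgEquivOfAlgebraic K L
  have hs' (g : Gal(L/K)) : ∃ l i, g = (σ ^ s l) ^ Fintype.card K ^ i := by
    obtain ⟨m, rfl⟩ := (FiniteField.bijective_frobeniusAlgEquivOfAlgebraic_pow K L).surjective g
    obtain ⟨l, i, hm⟩ := hs m
    refine ⟨l, i, ?_⟩
    rw [← pow_mul, pow_eq_pow_iff_modEq, FiniteField.orderOf_frobeniusAlgEquivOfAlgebraic]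
    exact hm
  let V' (l : ι) : Subrepresentation (Representation.ofDistribMulAction K Gal(L/K) L) :=
    ⟨V l, fun g _ => gal_apply_mem_of_pow_card_mem (hfrob l) g⟩
  rw [linearIndependent_pow_card_pow_iff]
  exact linearIndependent_apply_sum_iff_forall_ne_zero (V := V') hV hne (IsGalois.normalBasis K L)
    IsGalois.normalBasis_apply hs' ha

end FiniteField

section Bases

variable {R W κ ι : Type*} [Ring R] [AddCommGroup W] [Module R W] [DecidableEq ι]

lemma isInternal_span_image (b : Basis κ R W) {t : ι → Set κ} (ht : ∀ k, ∃! l, k ∈ t l) :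
    DirectSum.IsInternal fun l => Submodule.span R (b '' t l) := by
  apply DirectSum.isInternal_submodule_of_iSupIndep_of_iSup_eq_top
  · intro l
    simp_rw [← Submodule.span_iUnion, ← Set.image_iUnion]
    refine b.linearIndependent.disjoint_span_image (Set.disjoint_left.2 fun k hkl hk => ?_)
    obtain ⟨j, hjl, hkj⟩ := Set.mem_iUnion₂.1 hk
    exact hjl ((ht k).unique hkj hkl)
  · have hcover : ⋃ l, t l = Set.univ := Set.iUnion_eq_univ_iff.2 fun k => (ht k).exists
    rw [← Submodule.span_iUnion, ← Set.image_iUnion, hcover, Set.image_univ, b.span_eq]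

lemma exists_basis_eq_iff_linearIndependent {K : Type*} [Field K] [Module K W]
    [Module.Finite K W] [Fintype κ] (hcard : Fintype.card κ = finrank K W) {v : κ → W} :
    (∃ b : Basis κ K W, ∀ i, b i = v i) ↔ LinearIndependent K v := by
  refine ⟨?_, fun hv => ⟨basisOfLinearIndependentOfCardEqFinrank' v hv hcard, fun i => by simp⟩⟩
  rintro ⟨b, hb⟩
  exact funext hb ▸ b.linearIndependent

end Bases

section CyclotomicCosets

/-- The `q`-cyclotomic coset of `l` modulo `n`, i.e. the orbit of `l` under multiplication by `q`,
as a set of representatives in `{0, …, n - 1}`. -/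
def cyclotomicCoset (q n l : ℕ) : Set ℕ :=
  {m | m < n ∧ ∃ i : ℕ, m ≡ l * q ^ i [MOD n]}

variable {K L : Type*} [Field K] [Field L] [Algebra K L] {q n l : ℕ} {θ : L}

lemma mod_mem_cyclotomicCoset [NeZero n] : l % n ∈ cyclotomicCoset q n l :=
  ⟨Nat.mod_lt l (NeZero.pos n), 0, by simpa using Nat.mod_modEq l n⟩

lemma mul_mod_mem_cyclotomicCoset {m : ℕ} (hm : m ∈ cyclotomicCoset q n l) :
    m * q % n ∈ cyclotomicCoset q n l := by
  obtain ⟨hmn, i, hi⟩ := hm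
  refine ⟨Nat.mod_lt _ (Nat.zero_lt_of_lt hmn), i + 1, (Nat.mod_modEq _ n).trans ?_⟩
  rw [pow_succ, ← mul_assoc]
  exact hi.mul_right q

variable (K) in
/-- The span of the powers of `θ` with exponents in the `q`-cyclotomic coset of `l` modulo `n`; for
a root `θ` of `X ^ n - A` over a field with `q` elements this is the Frobenius-invariant subspace
generated by `θ ^ l`. -/
def cyclotomicSpan (q n : ℕ) (θ : L) (l : ℕ) : Submodule K L :=
  Submodule.span K ((fun m => θ ^ m) '' cyclotomicCoset q n l)

lemma cyclotomicSpan_ne_bot [NeZero n] {b : Basis (Fin n) K L} (hb : ∀ i, b i = θ ^ (i : ℕ)) :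
    cyclotomicSpan K q n θ l ≠ ⊥ := by
  refine (Submodule.ne_bot_iff _).2 ⟨θ ^ (l % n),
    Submodule.subset_span (Set.mem_image_of_mem _ mod_mem_cyclotomicCoset), ?_⟩
  exact hb ⟨l % n, Nat.mod_lt l (NeZero.pos n)⟩ ▸ b.ne_zero _

lemma isInternal_cyclotomicSpan {b : Basis (Fin n) K L} (hb : ∀ i, b i = θ ^ (i : ℕ))
    {ι : Type*} [DecidableEq ι] {s : ι → ℕ} (hs : ∀ m < n, ∃! l, m ∈ cyclotomicCoset q n (s l)) :
    DirectSum.IsInternal fun l => cyclotomicSpan K q n θ (s l) := by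
  have himage (l : ι) : b '' (Fin.val ⁻¹' cyclotomicCoset q n (s l)) =
      (fun m => θ ^ m) '' cyclotomicCoset q n (s l) := by
    have hb' : ⇑b = (fun m => θ ^ m) ∘ Fin.val := funext hb
    rw [hb', Set.image_comp, Set.image_preimage_eq_of_subset]
    exact fun m hm => Fin.range_val.ge hm.1
  simp only [cyclotomicSpan, ← himage]
  exact isInternal_span_image b fun i => hs i i.2

lemma pow_card_mem_cyclotomicSpan [Fintype K] {A : K} (hθ : θ ^ n = algebraMap K L A) {x : L}
    (hx : x ∈ cyclotomicSpan K (Fintype.card K) n θ l) :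
    x ^ Fintype.card K ∈ cyclotomicSpan K (Fintype.card K) n θ l := by
  refine pow_card_mem_span ?_ hx
  rintro _ ⟨m, hm, rfl⟩
  have hreduce (k : ℕ) : θ ^ k = A ^ (k / n) • θ ^ (k % n) := by
    rw [Algebra.smul_def, map_pow, ← hθ, ← pow_mul, ← pow_add, Nat.div_add_mod]
  rw [← pow_mul, hreduce]
  exact Submodule.smul_mem _ _
    (Submodule.subset_span (Set.mem_image_of_mem _ (mul_mod_mem_cyclotomicCoset hm)))

end CyclotomicCosets

section Binomials

variable {K L : Type*} [Field K] [Field L] [Algebra K L] {n : ℕ} {A : K} {θ : L}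

lemma natCast_ne_zero_of_irreducible_X_pow_sub_C [PerfectField K]
    (hirr : Irreducible ((X : K[X]) ^ n - C A)) : (n : K) ≠ 0 := by
  intro hn
  have hder : derivative ((X : K[X]) ^ n - C A) = 0 := by simp [derivative_X_pow, hn]
  have hsep := PerfectField.separable_of_irreducible hirr
  rw [Polynomial.Separable, hder, isCoprime_zero_right] at hsep
  exact hirr.not_isUnit hsep

lemma linearIndependent_pow_of_irreducible_X_pow_sub_C (hirr : Irreducible ((X : K[X]) ^ n - C A))
    (hθ : aeval θ ((X : K[X]) ^ n - C A) = 0) :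
    LinearIndependent K fun i : Fin n => θ ^ (i : ℕ) := by
  have hn := ne_zero_of_irreducible_X_pow_sub_C hirr
  have hli := linearIndependent_pow (K := K) θ
  rwa [← minpoly.eq_of_irreducible_of_monic hirr hθ (monic_X_pow_sub_C A hn),
    natDegree_X_pow_sub_C] at hli

theorem linearIndependent_pow_card_pow_sum_cyclotomicSpan_iff [Fintype K]
    (hn : (n : K) ≠ 0) (hθ : θ ^ n = algebraMap K L A)
    {b : Basis (Fin n) K L} (hb : ∀ i, b i = θ ^ (i : ℕ))
    {ι : Type*} [Fintype ι] {s : ι → ℕ}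
    (hs : ∀ m < n, ∃! l, m ∈ cyclotomicCoset (Fintype.card K) n (s l))
    {a : ι → L} (ha : ∀ l, a l ∈ cyclotomicSpan K (Fintype.card K) n θ (s l)) :
    LinearIndependent K (fun i : Fin n => (∑ l, a l) ^ Fintype.card K ^ (i : ℕ)) ↔
      ∀ l, a l ≠ 0 := by
  classical
  obtain rfl : finrank K L = n := finrank_eq_card_basis b |>.trans (Fintype.card_fin n)
  have : NeZero (finrank K L) := ⟨fun h => hn (by rw [h, Nat.cast_zero])⟩
  have : Module.Finite K L := .of_basis b
  have : Finite L := Module.finite_of_finite K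
  refine linearIndependent_pow_card_pow_sum_iff_forall_ne_zero hn
    (isInternal_cyclotomicSpan hb hs) (fun l => cyclotomicSpan_ne_bot hb)
    (fun l x => pow_card_mem_cyclotomicSpan hθ) (s := s) (fun m => ?_) ha
  obtain ⟨l, ⟨-, i, hi⟩, -⟩ := hs (m % finrank K L) (Nat.mod_lt _ (NeZero.pos _))
  exact ⟨l, i, (Nat.mod_modEq _ _).symm.trans hi⟩

end Binomials

/-- Semaev's theorem for binomials: with `x^n - A` irreducible over `F_q` with root `θ`,
`M_l` the classes of the relation `l₁ ~ l₂ ↔ l₁ ≡ l₂ q^i (mod n)` on `{0,…,n-1}` with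
representatives `S`, and `V_l` the `F_q`-span of `{θ^m : m ∈ M_l}`: the `V_l` give an
internal direct sum decomposition of `F_{q^n}`, each is Frobenius-invariant, and
`α = Σ α_l` is normal over `F_q` iff all components `α_l` are nonzero. -/
theorem stmt_9 (K L : Type) [Field K] [Fintype K] [Field L] [Algebra K L]
    (q n : ℕ) (hq : Fintype.card K = q) (hrank : Module.finrank K L = n)
    (A : K) (hirr : Irreducible ((X : Polynomial K) ^ n - C A))
    (θ : L) (hθ : aeval θ ((X : Polynomial K) ^ n - C A) = 0)
    (S : Finset ℕ) (hS : S ⊆ Finset.range n)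
    (M : ℕ → Finset ℕ)
    (hM : ∀ l ∈ S, ∀ m : ℕ, m ∈ M l ↔ (m < n ∧ ∃ i : ℕ, m % n = (l * q ^ i) % n))
    (hpart : ∀ m ∈ Finset.range n, ∃! l, l ∈ S ∧ m ∈ M l)
    (V : ℕ → Submodule K L)
    (hV : ∀ l, V l = Submodule.span K ((fun m => θ ^ m) '' ↑(M l))) :
    DirectSum.IsInternal (fun l : {l // l ∈ S} => V l) ∧
      (∀ l ∈ S, ∀ x ∈ V l, x ^ q ∈ V l) ∧
      ∀ (α : L) (comp : ℕ → L), (∀ l ∈ S, comp l ∈ V l) → ∑ l ∈ S, comp l = α →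
        ((∃ bas : Basis (Fin n) K L, ∀ i : Fin n, bas i = α ^ q ^ (i : ℕ)) ↔
          ∀ l ∈ S, comp l ≠ 0) := by
  subst hq
  have : NeZero n := ⟨ne_zero_of_irreducible_X_pow_sub_C hirr⟩
  have : Module.Finite K L := Module.finite_of_finrank_pos (hrank ▸ NeZero.pos n)
  have hcard : Fintype.card (Fin n) = finrank K L := (Fintype.card_fin n).trans hrank.symm
  have hθA : θ ^ n = algebraMap K L A := by simpa [sub_eq_zero] using hθ
  obtain ⟨b, hb⟩ := (exists_basis_eq_iff_linearIndependent hcard).2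
    (linearIndependent_pow_of_irreducible_X_pow_sub_C hirr hθ)
  have hM' (l : S) : (M l : Set ℕ) = cyclotomicCoset (Fintype.card K) n l := Set.ext (hM l l.2)
  have hVspan (l : S) : V l = cyclotomicSpan K (Fintype.card K) n θ l := by
    rw [hV, hM', cyclotomicSpan]
  have hcosets (m : ℕ) (hm : m < n) : ∃! l : S, m ∈ cyclotomicCoset (Fintype.card K) n l := by
    obtain ⟨l, ⟨hl, hml⟩, huniq⟩ := hpart m (Finset.mem_range.2 hm)
    simp_rw [← hM']
    exact ⟨⟨l, hl⟩, hml, fun l' hl' => Subtype.ext (huniq l' ⟨l'.2, hl'⟩)⟩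
  refine ⟨?_, fun l hl x hx => ?_, ?_⟩
  · simpa only [hVspan] using isInternal_cyclotomicSpan hb hcosets
  · rw [hVspan ⟨l, hl⟩] at hx ⊢
    exact pow_card_mem_cyclotomicSpan hθA hx
  · rintro _ comp hcomp rfl
    rw [exists_basis_eq_iff_linearIndependent hcard, ← Finset.sum_coe_sort S comp,
      linearIndependent_pow_card_pow_sum_cyclotomicSpan_iff
        (natCast_ne_zero_of_irreducible_X_pow_sub_C hirr) hθA hb hcosets
        fun l => hVspan l ▸ hcomp l l.2, Subtype.forall]
end
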